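/- Assume the additive-noise setting and assume in addition that X_t(ω) ∈ (0,∞) for all (t,ω) ∈ [0,T]×Ω. Then for all t ∈ [0,T] and all p ∈ ℝ it holds that E[ (X_t)^{−p} · exp( p ∫_0^t ( μ(X_s)/X_s − (p+1)/(2(X_s)²) ) ds ) ] ≤ E[ (X_0)^{−p} ], where both expectations are computed in [0,∞]. -/

import Mathlib

open MeasureTheory ProbabilityTheory Filter Set
open scoped ENNReal NNReal

noncomputable section

/-!
Write `X = X₀ + ∫ b + W` and let `f` be a `C²` function. Föllmer's pathwise Itô formula, along the
dyadic partitions of `[0, t]`, shows that the exponents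
`∑ (f' (X r) * (W s - W r) - f' (X r) ^ 2 / 2 * (s - r))` of discrete exponential martingales
converge almost surely to `f (X t) - f (X 0) - ∫ (f' (X) * b + (f'' (X) + f' (X) ^ 2) / 2)`. No
stochastic integral is needed: the only probabilistic input is that the weighted sums of squared
Brownian increments converge almost surely, by independence and Borel-Cantelli. The expectation of
`exp (f (X 0))` times each discrete exponential is that of `exp (f (X 0))`, so Fatou's lemma bounds
the expectation of the limit. The choice `f = -p * log` is the theorem.
-/

/-! ### Sums over dyadic partitions -/

/-- The `k`-th point of the partition of `[0, t]` into `2 ^ n` intervals of equal length. -/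
def dyadicPoint (t : ℝ) (n k : ℕ) : ℝ := t * k / 2 ^ n

/-- The sum of `f r s` over the consecutive points `r`, `s` of the `n`-th dyadic partition of
`[0, t]`. -/
def dyadicSum (t : ℝ) (n : ℕ) (f : ℝ → ℝ → ℝ) : ℝ :=
  ∑ k ∈ Finset.range (2 ^ n), f (dyadicPoint t n k) (dyadicPoint t n (k + 1))

/-- The points of all dyadic partitions of `[0, t]`. -/
def dyadicPoints (t : ℝ) : Set ℝ := {s | ∃ n k : ℕ, k ≤ 2 ^ n ∧ dyadicPoint t n k = s}

/-- `r` and `s` are dyadic points of `[0, t]` at the distance of consecutive points of the `n`-th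
partition. -/
structure IsDyadicStep (t : ℝ) (n : ℕ) (r s : ℝ) : Prop where
  left_mem : r ∈ dyadicPoints t
  right_mem : s ∈ dyadicPoints t
  sub_eq : s - r = t / 2 ^ n

section Dyadic

variable {t : ℝ} {n : ℕ} {f g : ℝ → ℝ → ℝ}

lemma dyadicPoint_zero (t : ℝ) (n : ℕ) : dyadicPoint t n 0 = 0 := by simp [dyadicPoint]

lemma dyadicPoint_two_pow (t : ℝ) (n : ℕ) : dyadicPoint t n (2 ^ n) = t := by simp [dyadicPoint]

lemma dyadicPoint_succ_sub (t : ℝ) (n k : ℕ) :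
    dyadicPoint t n (k + 1) - dyadicPoint t n k = t / 2 ^ n := by
  simp only [dyadicPoint]
  push_cast
  ring

lemma monotone_dyadicPoint (ht : 0 ≤ t) (n : ℕ) : Monotone (dyadicPoint t n) := by
  intro j k hjk
  unfold dyadicPoint
  gcongr

lemma countable_dyadicPoints (t : ℝ) : (dyadicPoints t).Countable :=
  (countable_range fun q : ℕ × ℕ => dyadicPoint t q.1 q.2).mono <| by
    rintro _ ⟨n, k, -, rfl⟩
    exact ⟨(n, k), rfl⟩

lemma dyadicPoints_subset_Icc (ht : 0 ≤ t) : dyadicPoints t ⊆ Icc 0 t := by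
  rintro _ ⟨n, k, hk, rfl⟩
  exact ⟨(dyadicPoint_zero t n).symm.le.trans (monotone_dyadicPoint ht n k.zero_le),
    (monotone_dyadicPoint ht n hk).trans_eq (dyadicPoint_two_pow t n)⟩

namespace IsDyadicStep

variable {r s : ℝ}

lemma le (h : IsDyadicStep t n r s) (ht : 0 ≤ t) : r ≤ s := by
  have : 0 ≤ t / 2 ^ n := by positivity
  linarith [h.sub_eq]

lemma Icc_subset (h : IsDyadicStep t n r s) (ht : 0 ≤ t) : Icc r s ⊆ Icc 0 t :=
  Icc_subset_Icc (dyadicPoints_subset_Icc ht h.left_mem).1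
    (dyadicPoints_subset_Icc ht h.right_mem).2

lemma intervalIntegrable (h : IsDyadicStep t n r s) (ht : 0 ≤ t) {m : ℝ → ℝ}
    (hm : IntervalIntegrable m volume 0 t) : IntervalIntegrable m volume r s := by
  refine hm.mono_set ?_
  rw [uIcc_of_le ht, uIcc_of_le (h.le ht)]
  exact h.Icc_subset ht

end IsDyadicStep

lemma isDyadicStep_dyadicPoint (t : ℝ) {n k : ℕ} (hk : k < 2 ^ n) :
    IsDyadicStep t n (dyadicPoint t n k) (dyadicPoint t n (k + 1)) :=
  ⟨⟨n, k, hk.le, rfl⟩, ⟨n, k + 1, hk, rfl⟩, dyadicPoint_succ_sub t n k⟩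

lemma dyadicSum_congr (h : ∀ r s, IsDyadicStep t n r s → f r s = g r s) :
    dyadicSum t n f = dyadicSum t n g :=
  Finset.sum_congr rfl fun _ hk => h _ _ (isDyadicStep_dyadicPoint t (Finset.mem_range.1 hk))

lemma abs_dyadicSum_le (h : ∀ r s, IsDyadicStep t n r s → |f r s| ≤ g r s) :
    |dyadicSum t n f| ≤ dyadicSum t n g :=
  (Finset.abs_sum_le_sum_abs _ _).trans <| Finset.sum_le_sum fun _ hk =>
    h _ _ (isDyadicStep_dyadicPoint t (Finset.mem_range.1 hk))

lemma dyadicSum_add : (dyadicSum t n fun r s => f r s + g r s) =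
    dyadicSum t n f + dyadicSum t n g :=
  Finset.sum_add_distrib

lemma dyadicSum_sub : (dyadicSum t n fun r s => f r s - g r s) =
    dyadicSum t n f - dyadicSum t n g :=
  Finset.sum_sub_distrib _ _

lemma dyadicSum_const_mul (c : ℝ) : (dyadicSum t n fun r s => c * f r s) = c * dyadicSum t n f :=
  (Finset.mul_sum _ _ _).symm

lemma dyadicSum_apply_sub_apply (t : ℝ) (n : ℕ) (F : ℝ → ℝ) :
    (dyadicSum t n fun r s => F s - F r) = F t - F 0 := by
  unfold dyadicSum
  rw [Finset.sum_range_sub (fun k => F (dyadicPoint t n k)), dyadicPoint_two_pow,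
    dyadicPoint_zero]

lemma dyadicSum_integral (ht : 0 ≤ t) (n : ℕ) {m : ℝ → ℝ} (hm : IntervalIntegrable m volume 0 t) :
    (dyadicSum t n fun r s => ∫ u in r..s, m u) = ∫ u in (0 : ℝ)..t, m u := by
  unfold dyadicSum
  rw [intervalIntegral.sum_integral_adjacent_intervals, dyadicPoint_zero, dyadicPoint_two_pow]
  exact fun k hk => (isDyadicStep_dyadicPoint t hk).intervalIntegrable ht hm

lemma measurable_dyadicSum {Ω : Type*} [MeasurableSpace Ω] {f : ℝ → ℝ → Ω → ℝ}
    (h : ∀ r s, IsDyadicStep t n r s → Measurable (f r s)) :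
    Measurable fun ω => dyadicSum t n fun r s => f r s ω :=
  Finset.measurable_sum _ fun _ hk =>
    h _ _ (isDyadicStep_dyadicPoint t (Finset.mem_range.1 hk))

lemma eventually_abs_sub_lt_of_isDyadicStep (ht : 0 ≤ t) {φ : ℝ → ℝ}
    (hφ : ContinuousOn φ (Icc 0 t)) {ε : ℝ} (hε : 0 < ε) :
    ∀ᶠ n in atTop, ∀ r s, IsDyadicStep t n r s → ∀ u ∈ Icc r s, |φ u - φ r| < ε := by
  obtain ⟨δ, hδ, h⟩ := Metric.uniformContinuousOn_iff.1
    (isCompact_Icc.uniformContinuousOn_of_continuous hφ) ε hε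
  have hmesh : Tendsto (fun n : ℕ => t / 2 ^ n) atTop (nhds 0) :=
    tendsto_const_nhds.div_atTop (tendsto_pow_atTop_atTop_of_one_lt one_lt_two)
  filter_upwards [hmesh.eventually_lt_const hδ] with n hn r s hrs u hu
  refine h u (hrs.Icc_subset ht hu) r (hrs.Icc_subset ht ⟨le_rfl, hrs.le ht⟩) ?_
  rw [Real.dist_eq, abs_of_nonneg (sub_nonneg.2 hu.1)]
  linarith [hu.2, hrs.sub_eq]

lemma tendsto_dyadicSum_zero_of_abs_le {C : ℝ} (hg : ∀ᶠ n in atTop, dyadicSum t n g ≤ C)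
    (hfg : ∀ ε > 0, ∀ᶠ n in atTop, ∀ r s, IsDyadicStep t n r s → |f r s| ≤ ε * g r s) :
    Tendsto (fun n => dyadicSum t n f) atTop (nhds 0) := by
  rw [Metric.tendsto_nhds]
  intro ε hε
  have hδ : 0 < ε / (|C| + 1) := by positivity
  filter_upwards [hg, hfg _ hδ] with n hn hfgn
  rw [Real.dist_eq, sub_zero]
  calc |dyadicSum t n f| ≤ dyadicSum t n fun r s => ε / (|C| + 1) * g r s := abs_dyadicSum_le hfgn
    _ = ε / (|C| + 1) * dyadicSum t n g := dyadicSum_const_mul _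
    _ ≤ ε / (|C| + 1) * |C| := by gcongr; exact hn.trans (le_abs_self C)
    _ < ε := by
      rw [div_mul_eq_mul_div, div_lt_iff₀ (by positivity)]
      linarith

end Dyadic

/-! ### Limits of dyadic sums -/

section Limits

variable {t : ℝ} {g m : ℝ → ℝ}

lemma tendsto_dyadicSum_mul_integral (ht : 0 ≤ t) (hg : ContinuousOn g (Icc 0 t))
    (hm : IntervalIntegrable m volume 0 t) :
    Tendsto (fun n => dyadicSum t n fun r s => g r * ∫ u in r..s, m u) atTop
      (nhds (∫ u in (0 : ℝ)..t, g u * m u)) := by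
  have hgm : IntervalIntegrable (fun u => g u * m u) volume 0 t :=
    hm.continuousOn_mul (by rwa [uIcc_of_le ht])
  suffices h : Tendsto (fun n => dyadicSum t n fun r s =>
      (g r * ∫ u in r..s, m u) - ∫ u in r..s, g u * m u) atTop (nhds 0) by
    simpa only [dyadicSum_sub, dyadicSum_integral ht _ hgm, sub_add_cancel, zero_add] using
      h.add_const (∫ u in (0 : ℝ)..t, g u * m u)
  refine tendsto_dyadicSum_zero_of_abs_le (g := fun r s => ∫ u in r..s, |m u|)
    (.of_forall fun n => (dyadicSum_integral ht n hm.abs).le) fun ε hε => ?_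
  filter_upwards [eventually_abs_sub_lt_of_isDyadicStep ht hg hε] with n hn r s hrs
  have hm' := hrs.intervalIntegrable ht hm
  rw [← intervalIntegral.integral_const_mul,
    ← intervalIntegral.integral_sub (hm'.const_mul _) (hrs.intervalIntegrable ht hgm),
    ← intervalIntegral.integral_const_mul, ← Real.norm_eq_abs]
  refine intervalIntegral.norm_integral_le_of_norm_le (hrs.le ht) (ae_of_all _ fun u hu => ?_)
    (hm'.abs.const_mul _)
  rw [Real.norm_eq_abs, ← sub_mul, abs_mul, abs_sub_comm]
  exact mul_le_mul_of_nonneg_right (hn r s hrs u (Ioc_subset_Icc_self hu)).le (abs_nonneg _)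

lemma tendsto_dyadicSum_mul_sub (ht : 0 ≤ t) (hg : ContinuousOn g (Icc 0 t)) :
    Tendsto (fun n => dyadicSum t n fun r s => g r * (s - r)) atTop
      (nhds (∫ u in (0 : ℝ)..t, g u)) := by
  simpa using tendsto_dyadicSum_mul_integral ht hg (m := fun _ => 1) intervalIntegrable_const

lemma tendsto_dyadicSum_mul_sub_mul_integral (ht : 0 ≤ t) (hg : ContinuousOn g (Icc 0 t))
    {y : ℝ → ℝ} (hy : ContinuousOn y (Icc 0 t)) (hm : IntervalIntegrable m volume 0 t) :
    Tendsto (fun n => dyadicSum t n fun r s => g r * (y s - y r) * ∫ u in r..s, m u) atTop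
      (nhds 0) := by
  obtain ⟨L, hL⟩ := isCompact_Icc.exists_bound_of_continuousOn hg
  have hL0 : 0 ≤ L := (norm_nonneg _).trans (hL 0 ⟨le_rfl, ht⟩)
  refine tendsto_dyadicSum_zero_of_abs_le (g := fun r s => ∫ u in r..s, |m u|)
    (.of_forall fun n => (dyadicSum_integral ht n hm.abs).le) fun ε hε => ?_
  have hδ : 0 < ε / (L + 1) := by positivity
  filter_upwards [eventually_abs_sub_lt_of_isDyadicStep ht hy hδ] with n hn r s hrs
  have hgy : |g r * (y s - y r)| ≤ ε := by
    calc |g r * (y s - y r)| = ‖g r‖ * |y s - y r| := abs_mul _ _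
      _ ≤ (L + 1) * (ε / (L + 1)) := by
        gcongr
        · linarith [hL r (dyadicPoints_subset_Icc ht hrs.left_mem)]
        · exact (hn r s hrs s ⟨hrs.le ht, le_rfl⟩).le
      _ = ε := by field_simp
  rw [abs_mul]
  gcongr
  exact intervalIntegral.abs_integral_le_integral_abs (hrs.le ht)

end Limits

/-! ### Pathwise Itô formula -/

/-- Along the dyadic partitions of `[0, t]`, the path `w` has Föllmer's pathwise quadratic variation
and it is that of Brownian motion: the measures `∑ (w s - w r) ^ 2 • dirac r` converge weakly to
Lebesgue measure on `[0, t]`. -/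
def HasBrownianQuadraticVariation (t : ℝ) (w : ℝ → ℝ) : Prop :=
  ∀ g : ℝ → ℝ, ContinuousOn g (Icc 0 t) →
    Tendsto (fun n => dyadicSum t n fun r s => g r * (w s - w r) ^ 2) atTop
      (nhds (∫ u in (0 : ℝ)..t, g u))

section Ito

variable {t : ℝ} {w x m : ℝ → ℝ}

lemma tendsto_dyadicSum_eval_mul {f : ℝ → ℝ → ℝ}
    (h : ∀ j : ℕ, Tendsto (fun n => dyadicSum t n fun r s => r ^ j * f r s) atTop
      (nhds (∫ u in (0 : ℝ)..t, u ^ j))) (q : Polynomial ℝ) :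
    Tendsto (fun n => dyadicSum t n fun r s => q.eval r * f r s) atTop
      (nhds (∫ u in (0 : ℝ)..t, q.eval u)) := by
  induction q using Polynomial.induction_on' with
  | add q₁ q₂ h₁ h₂ =>
    simp only [Polynomial.eval_add, add_mul, dyadicSum_add]
    rw [intervalIntegral.integral_add (q₁.continuous.intervalIntegrable _ _)
      (q₂.continuous.intervalIntegrable _ _)]
    exact h₁.add h₂
  | monomial j c =>
    simp only [Polynomial.eval_monomial, mul_assoc, dyadicSum_const_mul,
      intervalIntegral.integral_const_mul]
    exact (h j).const_mul c

-- Testing weak convergence on the countably many monomials only (Weierstrass) makes the exceptional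
-- null set of a random path independent of the test function.
lemma hasBrownianQuadraticVariation_of_forall_pow (ht : 0 ≤ t)
    (h : ∀ j : ℕ, Tendsto (fun n => dyadicSum t n fun r s => r ^ j * (w s - w r) ^ 2) atTop
      (nhds (∫ u in (0 : ℝ)..t, u ^ j))) :
    HasBrownianQuadraticVariation t w := by
  have htotal : ∀ᶠ n in atTop, (dyadicSum t n fun r s => (w s - w r) ^ 2) ≤ t + 1 := by
    have hone := h 0
    simp only [pow_zero, one_mul, intervalIntegral.integral_const, sub_zero, smul_eq_mul,
      mul_one] at hone
    exact hone.eventually_le_const (lt_add_one t)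
  intro g hg
  rw [Metric.tendsto_nhds]
  intro ε hε
  have hδ : 0 < ε / (2 * t + 2) := by positivity
  obtain ⟨q, hq⟩ := exists_polynomial_near_of_continuousOn 0 t g hg _ hδ
  filter_upwards [htotal,
    Metric.tendsto_nhds.1 (tendsto_dyadicSum_eval_mul h q) _ hδ] with n hn hqn
  have hsum : |(dyadicSum t n fun r s => g r * (w s - w r) ^ 2) -
      dyadicSum t n fun r s => q.eval r * (w s - w r) ^ 2| ≤ ε / (2 * t + 2) * (t + 1) := by
    rw [← dyadicSum_sub]
    refine (abs_dyadicSum_le (g := fun r s => ε / (2 * t + 2) * (w s - w r) ^ 2)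
      fun r s hrs => ?_).trans ?_
    · rw [← sub_mul, abs_mul, abs_of_nonneg (sq_nonneg (w s - w r)), abs_sub_comm]
      gcongr
      exact (hq r (dyadicPoints_subset_Icc ht hrs.left_mem)).le
    · rw [dyadicSum_const_mul]
      gcongr
  have hintegral : |(∫ u in (0 : ℝ)..t, q.eval u) - ∫ u in (0 : ℝ)..t, g u| ≤
      ε / (2 * t + 2) * t := by
    rw [← intervalIntegral.integral_sub (q.continuous.intervalIntegrable _ _)
      (ContinuousOn.intervalIntegrable (by rwa [uIcc_of_le ht]))]
    have hbound := intervalIntegral.norm_integral_le_of_norm_le_const (a := 0) (b := t)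
      (f := fun u => q.eval u - g u) (C := ε / (2 * t + 2)) fun u hu =>
        (hq u (Ioc_subset_Icc_self (uIoc_of_le ht ▸ hu))).le
    rwa [sub_zero, abs_of_nonneg ht] at hbound
  rw [Real.dist_eq] at hqn ⊢
  have hεsum : ε / (2 * t + 2) * (t + 1) + ε / (2 * t + 2) + ε / (2 * t + 2) * t = ε := by
    field_simp
    ring
  rw [abs_lt] at hqn ⊢
  rw [abs_le] at hsum hintegral
  constructor <;> linarith

-- A path of bounded variation contributes nothing to the quadratic variation.
lemma HasBrownianQuadraticVariation.of_sub_eq_integral_add (hw : HasBrownianQuadraticVariation t w)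
    (ht : 0 ≤ t) (hx : ContinuousOn x (Icc 0 t)) (hm : IntervalIntegrable m volume 0 t)
    (h : ∀ n r s, IsDyadicStep t n r s → x s - x r = (∫ u in r..s, m u) + (w s - w r)) :
    HasBrownianQuadraticVariation t x := by
  intro g hg
  set a : ℝ → ℝ := fun s => ∫ u in (0 : ℝ)..s, m u
  have ha : ContinuousOn a (Icc 0 t) := by
    simpa only [uIcc_of_le ht] using
      intervalIntegral.continuousOn_primitive_interval' hm left_mem_uIcc
  have hcross := tendsto_dyadicSum_mul_sub_mul_integral ht hg
    ((hx.const_smul (2 : ℝ)).sub ha) hm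
  have hsum := (hw g hg).add hcross
  rw [add_zero] at hsum
  refine hsum.congr fun n => ?_
  rw [← dyadicSum_add]
  refine dyadicSum_congr fun r s hrs => ?_
  have hzero := fun {u} (hu : u ∈ dyadicPoints t) =>
    hm.mono_set (uIcc_subset_uIcc_left (uIcc_of_le ht ▸ dyadicPoints_subset_Icc ht hu))
  have ha' : a s - a r = ∫ u in r..s, m u :=
    intervalIntegral.integral_interval_sub_left (hzero hrs.right_mem) (hzero hrs.left_mem)
  have hw' : w s - w r = x s - x r - (a s - a r) := by rw [ha', h n r s hrs]; ring
  simp only [smul_eq_mul, Pi.sub_apply, Pi.smul_apply, hw', ← ha']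
  ring

lemma abs_sub_taylor_two_le {f f' f'' : ℝ → ℝ} {a b ε : ℝ}
    (hf : ∀ y ∈ uIcc a b, HasDerivAt f (f' y) y) (hf' : ∀ y ∈ uIcc a b, HasDerivAt f' (f'' y) y)
    (hε : ∀ y ∈ uIcc a b, |f'' y - f'' a| ≤ ε) :
    |f b - f a - f' a * (b - a) - f'' a / 2 * (b - a) ^ 2| ≤ ε * (b - a) ^ 2 := by
  have hε0 : 0 ≤ ε := (abs_nonneg _).trans (hε a left_mem_uIcc)
  have hfirst : ∀ y ∈ uIcc a b, |f' y - f' a - f'' a * (y - a)| ≤ ε * |b - a| := by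
    intro y hy
    have hmv := (convex_uIcc a b).norm_image_sub_le_of_norm_hasDerivWithin_le
      (f := fun y => f' y - f' a - f'' a * (y - a))
      (fun z hz => (((hf' z hz).sub_const _).sub
        (((hasDerivAt_id z).sub_const a).const_mul _)).hasDerivWithinAt)
      (by simpa using hε) left_mem_uIcc hy
    simp only [Real.norm_eq_abs, sub_self, mul_zero, sub_zero] at hmv
    exact hmv.trans (by gcongr ε * ?_; exact abs_sub_left_of_mem_uIcc hy)
  have hmv := (convex_uIcc a b).norm_image_sub_le_of_norm_hasDerivWithin_le
    (f := fun y => f y - f a - f' a * (y - a) - f'' a / 2 * (y - a) ^ 2)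
    (f' := fun y => f' y - f' a - f'' a * (y - a))
    (fun z hz => ((((hf z hz).sub_const _).sub (((hasDerivAt_id z).sub_const a).const_mul _)).sub
      ((((hasDerivAt_id z).sub_const a).pow 2).const_mul _)).hasDerivWithinAt.congr_deriv
        (by simp; ring))
    hfirst left_mem_uIcc right_mem_uIcc
  simpa [mul_assoc, ← sq] using hmv

-- Föllmer's formula: sum the second-order Taylor expansions of `f` along the partition.
lemma HasBrownianQuadraticVariation.tendsto_dyadicSum_deriv_mul_sub
    (hqv : HasBrownianQuadraticVariation t x) (ht : 0 ≤ t) (hx : ContinuousOn x (Icc 0 t))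
    {f f' f'' : ℝ → ℝ} (hf : ∀ s ∈ Icc 0 t, HasDerivAt f (f' (x s)) (x s))
    (hf' : ∀ s ∈ Icc 0 t, HasDerivAt f' (f'' (x s)) (x s))
    (hf'' : ContinuousOn (fun s => f'' (x s)) (Icc 0 t)) :
    Tendsto (fun n => dyadicSum t n fun r s => f' (x r) * (x s - x r)) atTop
      (nhds (f (x t) - f (x 0) - ∫ u in (0 : ℝ)..t, f'' (x u) / 2)) := by
  have hremainder : Tendsto (fun n => dyadicSum t n fun r s => f (x s) - f (x r) -
      f' (x r) * (x s - x r) - f'' (x r) / 2 * (x s - x r) ^ 2) atTop (nhds 0) := by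
    have hone := hqv 1 continuousOn_const
    simp only [Pi.one_apply, one_mul] at hone
    refine tendsto_dyadicSum_zero_of_abs_le (hone.eventually_le_const (lt_add_one _))
      fun ε hε => ?_
    filter_upwards [eventually_abs_sub_lt_of_isDyadicStep ht hf'' hε] with n hn r s hrs
    have hIcc := hrs.Icc_subset ht
    have huIcc : uIcc r s = Icc r s := uIcc_of_le (hrs.le ht)
    have himage : uIcc (x r) (x s) ⊆ x '' Icc r s :=
      huIcc ▸ intermediate_value_uIcc (hx.mono (huIcc.trans_subset hIcc))
    refine abs_sub_taylor_two_le ?_ ?_ ?_ <;> intro y hy <;> obtain ⟨u, hu, rfl⟩ := himage hy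
    · exact hf u (hIcc hu)
    · exact hf' u (hIcc hu)
    · exact (hn r s hrs u hu).le
  have hlim := ((hqv _ (hf''.div_const 2)).add hremainder).const_sub (f (x t) - f (x 0))
  rw [add_zero] at hlim
  refine hlim.congr fun n => ?_
  rw [← dyadicSum_apply_sub_apply t n fun s => f (x s), ← dyadicSum_add, ← dyadicSum_sub]
  exact dyadicSum_congr fun r s _ => by ring

lemma HasBrownianQuadraticVariation.tendsto_dyadicSum_exponent
    (hw : HasBrownianQuadraticVariation t w) (ht : 0 ≤ t) (hx : ContinuousOn x (Icc 0 t))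
    (hm : IntervalIntegrable m volume 0 t)
    (h : ∀ n r s, IsDyadicStep t n r s → x s - x r = (∫ u in r..s, m u) + (w s - w r))
    {f f' f'' : ℝ → ℝ} (hf : ∀ s ∈ Icc 0 t, HasDerivAt f (f' (x s)) (x s))
    (hf' : ∀ s ∈ Icc 0 t, HasDerivAt f' (f'' (x s)) (x s))
    (hf'' : ContinuousOn (fun s => f'' (x s)) (Icc 0 t)) :
    Tendsto (fun n => dyadicSum t n fun r s =>
        f' (x r) * (w s - w r) - f' (x r) ^ 2 / 2 * (s - r)) atTop
      (nhds (f (x t) - f (x 0) - ∫ u in (0 : ℝ)..t,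
        (f' (x u) * m u + (f'' (x u) + f' (x u) ^ 2) / 2))) := by
  have hf'c : ContinuousOn (fun s => f' (x s)) (Icc 0 t) := fun s hs =>
    (hf' s hs).continuousAt.comp_continuousWithinAt (hx s hs)
  have hf'sq : ContinuousOn (fun s => f' (x s) ^ 2 / 2) (Icc 0 t) := (hf'c.pow 2).div_const 2
  have hf''half : ContinuousOn (fun s => f'' (x s) / 2) (Icc 0 t) := hf''.div_const 2
  have hito := (hw.of_sub_eq_integral_add ht hx hm h).tendsto_dyadicSum_deriv_mul_sub ht hx
    hf hf' hf''
  have hlim := (hito.sub (tendsto_dyadicSum_mul_integral ht hf'c hm)).sub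
    (tendsto_dyadicSum_mul_sub ht hf'sq)
  have hint : ∫ u in (0 : ℝ)..t, (f' (x u) * m u + (f'' (x u) + f' (x u) ^ 2) / 2) =
      (∫ u in (0 : ℝ)..t, f'' (x u) / 2) + (∫ u in (0 : ℝ)..t, f' (x u) * m u) +
        ∫ u in (0 : ℝ)..t, f' (x u) ^ 2 / 2 := by
    rw [← uIcc_of_le ht] at hf'c hf'sq hf''half
    rw [← intervalIntegral.integral_add hf''half.intervalIntegrable (hm.continuousOn_mul hf'c),
      ← intervalIntegral.integral_add
        (hf''half.intervalIntegrable.add (hm.continuousOn_mul hf'c)) hf'sq.intervalIntegrable]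
    congr 1 with u
    ring
  rw [hint, ← sub_sub, ← sub_sub]
  refine hlim.congr fun n => ?_
  rw [← dyadicSum_sub, ← dyadicSum_sub]
  refine dyadicSum_congr fun r s hrs => ?_
  rw [h n r s hrs]
  ring

end Ito

/-! ### Brownian increments -/

lemma ae_tendsto_sub_integral_of_summable_variance {Ω : Type*} {mΩ : MeasurableSpace Ω}
    {P : Measure Ω} [IsFiniteMeasure P] {S : ℕ → Ω → ℝ} (hS : ∀ n, MemLp (S n) 2 P)
    (hvar : Summable fun n => Var[S n; P]) :
    ∀ᵐ ω ∂P, Tendsto (fun n => S n ω - ∫ ω', S n ω' ∂P) atTop (nhds 0) := by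
  set D : ℕ → Ω → ℝ≥0∞ := fun n ω => ENNReal.ofReal ((S n ω - ∫ ω', S n ω' ∂P) ^ 2)
  have hD : ∀ n, AEMeasurable (D n) P := fun n =>
    (((hS n).1.aemeasurable.sub_const _).pow_const 2).ennreal_ofReal
  have hfinite : ∫⁻ ω, ∑' n, D n ω ∂P ≠ ∞ := by
    rw [lintegral_tsum hD]
    simp only [D, ← evariance_eq_lintegral_ofReal, ← (hS _).ofReal_variance_eq]
    exact hvar.tsum_ofReal_ne_top
  filter_upwards [ae_lt_top' (AEMeasurable.tsum hD) hfinite] with ω hω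
  have hsq : Tendsto (fun n => (S n ω - ∫ ω', S n ω' ∂P) ^ 2) atTop (nhds 0) := by
    simpa [D, Function.comp_def, ENNReal.toReal_ofReal, sq_nonneg] using
      (ENNReal.tendsto_toReal ENNReal.zero_ne_top).comp
        (ENNReal.tendsto_atTop_zero_of_tsum_ne_top hω.ne)
  simpa [Real.sqrt_sq_eq_abs, tendsto_zero_iff_abs_tendsto_zero, Function.comp_def] using hsq.sqrt

lemma memLp_sq_gaussianReal (c : ℝ) (v : ℝ≥0) :
    MemLp (fun z => z ^ 2) 2 (gaussianReal c v) := by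
  have h := memLp_id_gaussianReal' (μ := c) (v := v) 4 (by simp)
  rw [memLp_two_iff_integrable_sq (by fun_prop)]
  refine (h.integrable_norm_pow (p := 4) (by simp)).congr (ae_of_all _ fun z => ?_)
  simp only [id, Real.norm_eq_abs, ← pow_mul]
  exact Even.pow_abs (by decide) z

lemma integral_sq_gaussianReal (v : ℝ≥0) : ∫ z, z ^ 2 ∂(gaussianReal 0 v) = v := by
  rw [← variance_fun_id_gaussianReal (μ := 0) (v := v),
    variance_of_integral_eq_zero aemeasurable_id' integral_id_gaussianReal]

lemma variance_sq_gaussianReal (v : ℝ≥0) :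
    Var[fun z => z ^ 2; gaussianReal 0 v] = v ^ 2 * Var[fun z => z ^ 2; gaussianReal 0 1] := by
  have hmap : (gaussianReal 0 1).map (Real.sqrt v * ·) = gaussianReal 0 v := by
    rw [gaussianReal_map_const_mul]
    congr 1
    · simp
    · ext
      simp
  rw [← hmap, variance_map (by fun_prop) (by fun_prop), ← variance_const_mul]
  congr 1 with z
  simp [mul_pow]

lemma lintegral_exp_mul_sub_gaussianReal (v : ℝ≥0) (h : ℝ) :
    ∫⁻ z, ENNReal.ofReal (Real.exp (h * z - h ^ 2 / 2 * v)) ∂(gaussianReal 0 v) = 1 := by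
  have hmgf : ∫ z, Real.exp (h * z) ∂(gaussianReal 0 v) = Real.exp (v * h ^ 2 / 2) := by
    simpa [mgf] using congrFun (mgf_id_gaussianReal (μ := 0) (v := v)) h
  simp_rw [Real.exp_sub]
  rw [← ofReal_integral_eq_lintegral_ofReal ((integrable_exp_mul_gaussianReal h).div_const _)
    (ae_of_all _ fun z => by positivity), integral_div, hmgf, ← Real.exp_sub]
  ring_nf
  simp

/-- On `[0, T]`, the process `W` is adapted to `F` and has the increments of an `F`-Brownian motion:
`W t - W s` has law `N(0, t - s)` and is independent of `F s`. The notion leaves the starting value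
and the continuity of the paths open. -/
structure HasBrownianIncrements {Ω : Type*} {mΩ : MeasurableSpace Ω} (W : ℝ → Ω → ℝ)
    (F : Filtration ℝ mΩ) (P : Measure Ω) (T : ℝ) : Prop where
  measurable : ∀ t ∈ Icc 0 T, Measurable[F t] (W t)
  map_sub : ∀ s t, 0 ≤ s → s ≤ t → t ≤ T →
    P.map (fun ω => W t ω - W s ω) = gaussianReal 0 (Real.toNNReal (t - s))
  indep_sub : ∀ s t, 0 ≤ s → s ≤ t → t ≤ T →
    Indep (MeasurableSpace.comap (fun ω => W t ω - W s ω) inferInstance) (F s) P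

namespace HasBrownianIncrements

variable {Ω : Type*} {mΩ : MeasurableSpace Ω} {P : Measure Ω} {W : ℝ → Ω → ℝ}
  {F : Filtration ℝ mΩ} {T : ℝ}

lemma mono (hW : HasBrownianIncrements W F P T) {t : ℝ} (ht : t ≤ T) :
    HasBrownianIncrements W F P t where
  measurable s hs := hW.measurable s ⟨hs.1, hs.2.trans ht⟩
  map_sub r s h0 hrs hs := hW.map_sub r s h0 hrs (hs.trans ht)
  indep_sub r s h0 hrs hs := hW.indep_sub r s h0 hrs (hs.trans ht)

section Increment

variable {s t : ℝ}

lemma measurable_sub (hW : HasBrownianIncrements W F P T) (hs : 0 ≤ s) (hst : s ≤ t) (ht : t ≤ T) :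
    Measurable[F t] fun ω => W t ω - W s ω :=
  (hW.measurable t ⟨hs.trans hst, ht⟩).sub
    ((hW.measurable s ⟨hs, hst.trans ht⟩).mono (F.mono hst) le_rfl)

lemma hasLaw_sub (hW : HasBrownianIncrements W F P T) (hs : 0 ≤ s) (hst : s ≤ t) (ht : t ≤ T) :
    HasLaw (fun ω => W t ω - W s ω) (gaussianReal 0 (Real.toNNReal (t - s))) P :=
  ⟨((hW.measurable_sub hs hst ht).mono (F.le t) le_rfl).aemeasurable, hW.map_sub s t hs hst ht⟩

lemma indepFun_sub (hW : HasBrownianIncrements W F P T) (hs : 0 ≤ s) (hst : s ≤ t) (ht : t ≤ T)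
    {E : Type*} [MeasurableSpace E] {Y : Ω → E} (hY : Measurable[F s] Y) :
    IndepFun Y (fun ω => W t ω - W s ω) P := by
  rw [IndepFun_iff_Indep]
  exact (indep_of_indep_of_le_right (hW.indep_sub s t hs hst ht) hY.comap_le).symm

lemma memLp_sub_sq (hW : HasBrownianIncrements W F P T) (hs : 0 ≤ s) (hst : s ≤ t) (ht : t ≤ T) :
    MemLp (fun ω => (W t ω - W s ω) ^ 2) 2 P := by
  have hlaw := hW.hasLaw_sub hs hst ht
  have hsq := memLp_sq_gaussianReal 0 (t - s).toNNReal
  rw [← hlaw.map_eq] at hsq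
  exact hsq.comp_of_map hlaw.aemeasurable

lemma integral_sub_sq (hW : HasBrownianIncrements W F P T) (hs : 0 ≤ s) (hst : s ≤ t)
    (ht : t ≤ T) : ∫ ω, (W t ω - W s ω) ^ 2 ∂P = t - s := by
  have hlaw := hW.hasLaw_sub hs hst ht
  rw [← Real.coe_toNNReal (t - s) (sub_nonneg.2 hst), ← integral_sq_gaussianReal, ← hlaw.map_eq,
    integral_map hlaw.aemeasurable (by fun_prop)]

lemma variance_sub_sq (hW : HasBrownianIncrements W F P T) (hs : 0 ≤ s) (hst : s ≤ t)
    (ht : t ≤ T) : Var[fun ω => (W t ω - W s ω) ^ 2; P] =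
      (t - s) ^ 2 * Var[fun z => z ^ 2; gaussianReal 0 1] := by
  have hlaw := hW.hasLaw_sub hs hst ht
  rw [← Real.coe_toNNReal (t - s) (sub_nonneg.2 hst), ← variance_sq_gaussianReal, ← hlaw.map_eq,
    variance_map (by fun_prop) hlaw.aemeasurable]
  simp only [Function.comp_def]

lemma lintegral_mul_exp_sub (hW : HasBrownianIncrements W F P T) [IsFiniteMeasure P]
    (hs : 0 ≤ s) (hst : s ≤ t) (ht : t ≤ T) {G : Ω → ℝ≥0∞} (hG : Measurable[F s] G)
    {H : Ω → ℝ} (hH : Measurable[F s] H) :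
    ∫⁻ ω, G ω * ENNReal.ofReal
      (Real.exp (H ω * (W t ω - W s ω) - H ω ^ 2 / 2 * (t - s))) ∂P = ∫⁻ ω, G ω ∂P := by
  have hlaw := hW.hasLaw_sub hs hst ht
  have hY : Measurable[F s] fun ω => (G ω, H ω) := hG.prodMk hH
  have hY' : Measurable fun ω => (G ω, H ω) := hY.mono (F.le s) le_rfl
  have hjoint := (indepFun_iff_map_prod_eq_prod_map_map hY'.aemeasurable hlaw.aemeasurable).1
    (hW.indepFun_sub hs hst ht hY)
  rw [hlaw.map_eq] at hjoint
  set φ : (ℝ≥0∞ × ℝ) × ℝ → ℝ≥0∞ := fun q =>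
    q.1.1 * ENNReal.ofReal (Real.exp (q.1.2 * q.2 - q.1.2 ^ 2 / 2 * (t - s).toNNReal))
  have hφ : Measurable φ := by fun_prop
  have hinner : ∀ q, ∫⁻ z, φ (q, z) ∂(gaussianReal 0 (t - s).toNNReal) = q.1 := by
    intro q
    simp only [φ]
    rw [lintegral_const_mul _ (by fun_prop), lintegral_exp_mul_sub_gaussianReal, mul_one]
  calc ∫⁻ ω, G ω * ENNReal.ofReal
        (Real.exp (H ω * (W t ω - W s ω) - H ω ^ 2 / 2 * (t - s))) ∂P
      = ∫⁻ ω, φ ((G ω, H ω), W t ω - W s ω) ∂P := by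
        simp only [φ, Real.coe_toNNReal (t - s) (sub_nonneg.2 hst)]
    _ = ∫⁻ q, φ q ∂((P.map fun ω => (G ω, H ω)).prod (gaussianReal 0 (t - s).toNNReal)) := by
        rw [← hjoint, lintegral_map' hφ.aemeasurable (hY'.aemeasurable.prodMk hlaw.aemeasurable)]
    _ = ∫⁻ q, q.1 ∂(P.map fun ω => (G ω, H ω)) := by
        rw [lintegral_prod _ hφ.aemeasurable]
        simp_rw [hinner]
    _ = ∫⁻ ω, G ω ∂P := lintegral_map measurable_fst hY'

end Increment

section Partition

variable {τ : ℕ → ℝ} {n : ℕ}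

lemma pairwise_indepFun_sub (hW : HasBrownianIncrements W F P T) (hτ : Monotone τ) (h0 : 0 ≤ τ 0)
    (hn : τ n ≤ T) : (Finset.range n : Set ℕ).Pairwise fun j k =>
      IndepFun (fun ω => W (τ (j + 1)) ω - W (τ j) ω) (fun ω => W (τ (k + 1)) ω - W (τ k) ω) P := by
  have hlt : ∀ j k, j < k → k < n →
      IndepFun (fun ω => W (τ (j + 1)) ω - W (τ j) ω) (fun ω => W (τ (k + 1)) ω - W (τ k) ω) P := by
    intro j k hjk hk
    have hτ0 : ∀ i, 0 ≤ τ i := fun i => h0.trans (hτ i.zero_le)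
    have hτT : ∀ i ≤ n, τ i ≤ T := fun i hi => (hτ hi).trans hn
    exact hW.indepFun_sub (hτ0 k) (hτ k.le_succ) (hτT _ hk)
      ((hW.measurable_sub (hτ0 j) (hτ j.le_succ) (hτT _ (hjk.trans hk))).mono
        (F.mono (hτ hjk)) le_rfl)
  intro j hj k hk hjk
  rw [Finset.mem_coe, Finset.mem_range] at hj hk
  exact hjk.lt_or_gt.elim (fun h => hlt j k h hk) fun h => (hlt k j h hj).symm

lemma memLp_mul_sub_sq_of_monotone (hW : HasBrownianIncrements W F P T) (hτ : Monotone τ)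
    (h0 : 0 ≤ τ 0) (hn : τ n ≤ T) (c : ℝ) {k : ℕ} (hk : k ∈ Finset.range n) :
    MemLp (fun ω => c * (W (τ (k + 1)) ω - W (τ k) ω) ^ 2) 2 P :=
  (hW.memLp_sub_sq (h0.trans (hτ k.zero_le)) (hτ k.le_succ)
    ((hτ (Finset.mem_range.1 hk)).trans hn)).const_mul c

lemma integral_sum_mul_sub_sq (hW : HasBrownianIncrements W F P T) [IsFiniteMeasure P]
    (hτ : Monotone τ) (h0 : 0 ≤ τ 0) (hn : τ n ≤ T) (c : ℕ → ℝ) :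
    ∫ ω, ∑ k ∈ Finset.range n, c k * (W (τ (k + 1)) ω - W (τ k) ω) ^ 2 ∂P =
      ∑ k ∈ Finset.range n, c k * (τ (k + 1) - τ k) := by
  rw [integral_finsetSum _ fun k hk =>
    (hW.memLp_mul_sub_sq_of_monotone hτ h0 hn (c k) hk).integrable one_le_two]
  refine Finset.sum_congr rfl fun k hk => ?_
  rw [integral_const_mul, hW.integral_sub_sq (h0.trans (hτ k.zero_le)) (hτ k.le_succ)
    ((hτ (Finset.mem_range.1 hk)).trans hn)]

lemma variance_sum_mul_sub_sq (hW : HasBrownianIncrements W F P T) [IsProbabilityMeasure P]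
    (hτ : Monotone τ) (h0 : 0 ≤ τ 0) (hn : τ n ≤ T) (c : ℕ → ℝ) :
    Var[fun ω => ∑ k ∈ Finset.range n, c k * (W (τ (k + 1)) ω - W (τ k) ω) ^ 2; P] =
      ∑ k ∈ Finset.range n,
        c k ^ 2 * ((τ (k + 1) - τ k) ^ 2 * Var[fun z => z ^ 2; gaussianReal 0 1]) := by
  have hsum := IndepFun.variance_sum (μ := P) (s := Finset.range n)
    (X := fun k ω => c k * (W (τ (k + 1)) ω - W (τ k) ω) ^ 2)
    (fun k hk => hW.memLp_mul_sub_sq_of_monotone hτ h0 hn (c k) hk)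
    ((hW.pairwise_indepFun_sub hτ h0 hn).imp fun {j k} h =>
      h.comp (φ := fun z => c j * z ^ 2) (ψ := fun z => c k * z ^ 2) (by fun_prop) (by fun_prop))
  simp only [Finset.sum_fn] at hsum
  rw [hsum]
  refine Finset.sum_congr rfl fun k hk => ?_
  rw [variance_const_mul, hW.variance_sub_sq (h0.trans (hτ k.zero_le)) (hτ k.le_succ)
    ((hτ (Finset.mem_range.1 hk)).trans hn)]

lemma lintegral_mul_exp_sum (hW : HasBrownianIncrements W F P T) [IsFiniteMeasure P]
    (hτ : Monotone τ) (h0 : 0 ≤ τ 0) (hn : τ n ≤ T) {G : Ω → ℝ≥0∞} (hG : Measurable[F (τ 0)] G)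
    {H : ℕ → Ω → ℝ} (hH : ∀ k < n, Measurable[F (τ k)] (H k)) :
    ∫⁻ ω, G ω * ENNReal.ofReal (Real.exp (∑ k ∈ Finset.range n,
      (H k ω * (W (τ (k + 1)) ω - W (τ k) ω) - H k ω ^ 2 / 2 * (τ (k + 1) - τ k)))) ∂P =
      ∫⁻ ω, G ω ∂P := by
  induction n with
  | zero => simp
  | succ n ih =>
    have hτ0 : ∀ i, 0 ≤ τ i := fun i => h0.trans (hτ i.zero_le)
    have hτT : ∀ i ≤ n + 1, τ i ≤ T := fun i hi => (hτ hi).trans hn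
    have hpast : Measurable[F (τ n)] fun ω => G ω * ENNReal.ofReal (Real.exp
        (∑ k ∈ Finset.range n, (H k ω * (W (τ (k + 1)) ω - W (τ k) ω) -
          H k ω ^ 2 / 2 * (τ (k + 1) - τ k)))) := by
      refine (hG.mono (F.mono (hτ n.zero_le)) le_rfl).mul
        (Real.measurable_exp.comp (Finset.measurable_sum _ fun k hk => ?_)).ennreal_ofReal
      have hk : k < n := Finset.mem_range.1 hk
      have hHk := (hH k (hk.trans n.lt_succ_self)).mono (F.mono (hτ hk.le)) le_rfl
      exact (hHk.mul ((hW.measurable_sub (hτ0 k) (hτ k.le_succ) (hτT _ (by omega))).mono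
        (F.mono (hτ hk)) le_rfl)).sub (((hHk.pow_const 2).div_const 2).mul_const _)
    rw [← ih (hτT n n.le_succ) fun k hk => hH k (hk.trans n.lt_succ_self),
      ← hW.lintegral_mul_exp_sub (hτ0 n) (hτ n.le_succ) hn hpast (hH n n.lt_succ_self)]
    simp_rw [Finset.sum_range_succ, Real.exp_add, ENNReal.ofReal_mul (Real.exp_pos _).le, mul_assoc]

end Partition

section QuadraticVariation

variable {g : ℝ → ℝ}

lemma integral_dyadicSum_mul_sub_sq (hW : HasBrownianIncrements W F P T) [IsFiniteMeasure P]
    (hT : 0 ≤ T) (n : ℕ) : ∫ ω, (dyadicSum T n fun r s => g r * (W s ω - W r ω) ^ 2) ∂P =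
      dyadicSum T n fun r s => g r * (s - r) :=
  hW.integral_sum_mul_sub_sq (monotone_dyadicPoint hT n) (dyadicPoint_zero T n).ge
    (dyadicPoint_two_pow T n).le fun k => g (dyadicPoint T n k)

lemma variance_dyadicSum_mul_sub_sq_le (hW : HasBrownianIncrements W F P T)
    [IsProbabilityMeasure P] (hT : 0 ≤ T) {L : ℝ} (hL : ∀ s ∈ Icc 0 T, |g s| ≤ L) (n : ℕ) :
    Var[fun ω => dyadicSum T n fun r s => g r * (W s ω - W r ω) ^ 2; P] ≤
      L ^ 2 * T ^ 2 * Var[fun z => z ^ 2; gaussianReal 0 1] * (1 / 2) ^ n := by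
  set V := Var[fun z => z ^ 2; gaussianReal 0 1]
  have hV : 0 ≤ V := variance_nonneg _ _
  calc Var[fun ω => dyadicSum T n fun r s => g r * (W s ω - W r ω) ^ 2; P]
      = dyadicSum T n fun r s => g r ^ 2 * ((s - r) ^ 2 * V) :=
        hW.variance_sum_mul_sub_sq (monotone_dyadicPoint hT n) (dyadicPoint_zero T n).ge
          (dyadicPoint_two_pow T n).le fun k => g (dyadicPoint T n k)
    _ ≤ dyadicSum T n fun _ _ => L ^ 2 * ((T / 2 ^ n) ^ 2 * V) := by
        refine (le_abs_self _).trans (abs_dyadicSum_le fun r s hrs => ?_)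
        rw [hrs.sub_eq, abs_of_nonneg (by positivity), ← sq_abs (g r)]
        gcongr
        exact hL r (dyadicPoints_subset_Icc hT hrs.left_mem)
    _ = L ^ 2 * T ^ 2 * V * (1 / 2) ^ n := by
        rw [dyadicSum, Finset.sum_const, Finset.card_range, nsmul_eq_mul, one_div, inv_pow]
        push_cast
        field_simp

lemma ae_tendsto_dyadicSum_mul_sub_sq (hW : HasBrownianIncrements W F P T)
    [IsProbabilityMeasure P] (hT : 0 ≤ T) (hg : ContinuousOn g (Icc 0 T)) :
    ∀ᵐ ω ∂P, Tendsto (fun n => dyadicSum T n fun r s => g r * (W s ω - W r ω) ^ 2) atTop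
      (nhds (∫ u in (0 : ℝ)..T, g u)) := by
  obtain ⟨L, hL⟩ := isCompact_Icc.exists_bound_of_continuousOn hg
  have hL2 : ∀ n, MemLp (fun ω => dyadicSum T n fun r s => g r * (W s ω - W r ω) ^ 2) 2 P :=
    fun n => memLp_finsetSum _ fun k hk => hW.memLp_mul_sub_sq_of_monotone
      (monotone_dyadicPoint hT n) (dyadicPoint_zero T n).ge (dyadicPoint_two_pow T n).le
      (g (dyadicPoint T n k)) hk
  have hsummable : Summable fun n =>
      Var[fun ω => dyadicSum T n fun r s => g r * (W s ω - W r ω) ^ 2; P] :=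
    .of_nonneg_of_le (fun _ => variance_nonneg _ _) (hW.variance_dyadicSum_mul_sub_sq_le hT hL)
      (summable_geometric_two.mul_left _)
  filter_upwards [ae_tendsto_sub_integral_of_summable_variance hL2 hsummable] with ω hω
  simpa only [hW.integral_dyadicSum_mul_sub_sq hT, sub_add_cancel, zero_add] using
    hω.add (tendsto_dyadicSum_mul_sub hT hg)

lemma ae_hasBrownianQuadraticVariation (hW : HasBrownianIncrements W F P T)
    [IsProbabilityMeasure P] (hT : 0 ≤ T) :
    ∀ᵐ ω ∂P, HasBrownianQuadraticVariation T fun s => W s ω := by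
  have hpow := fun j : ℕ => hW.ae_tendsto_dyadicSum_mul_sub_sq hT (continuousOn_pow (M := ℝ) j)
  filter_upwards [ae_all_iff.2 hpow] with ω hω
  exact hasBrownianQuadraticVariation_of_forall_pow hT hω

end QuadraticVariation

end HasBrownianIncrements

/-! ### Exponential Lyapunov estimate -/

section Lyapunov

variable {Ω : Type*} {mΩ : MeasurableSpace Ω} {P : Measure Ω} {T : ℝ}
  {F : Filtration ℝ mΩ} {W X b : ℝ → Ω → ℝ}

lemma ae_forall_isDyadicStep_sub_eq (hT : 0 ≤ T)
    (hb : ∀ᵐ ω ∂P, IntervalIntegrable (fun s => b s ω) volume 0 T)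
    (hSDE : ∀ t ∈ Icc 0 T, ∀ᵐ ω ∂P, X t ω = X 0 ω + (∫ s in (0 : ℝ)..t, b s ω) + W t ω) :
    ∀ᵐ ω ∂P, ∀ n r s, IsDyadicStep T n r s →
      X s ω - X r ω = (∫ u in r..s, b u ω) + (W s ω - W r ω) := by
  have hdyadic : ∀ᵐ ω ∂P, ∀ t ∈ dyadicPoints T,
      X t ω = X 0 ω + (∫ s in (0 : ℝ)..t, b s ω) + W t ω :=
    (ae_ball_iff (countable_dyadicPoints T)).2 fun t ht =>
      hSDE t (dyadicPoints_subset_Icc hT ht)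
  filter_upwards [hdyadic, hb] with ω hω hbω n r s hrs
  have hint := fun {t} (ht : t ∈ dyadicPoints T) =>
    hbω.mono_set (uIcc_subset_uIcc_left (uIcc_of_le hT ▸ dyadicPoints_subset_Icc hT ht))
  rw [hω s hrs.right_mem, hω r hrs.left_mem, ← intervalIntegral.integral_interval_sub_left
    (hint hrs.right_mem) (hint hrs.left_mem)]
  ring

theorem HasBrownianIncrements.lintegral_exp_sub_integral_le [IsProbabilityMeasure P]
    (hW : HasBrownianIncrements W F P T) (hT : 0 ≤ T) (hX : ∀ t ∈ Icc 0 T, Measurable[F t] (X t))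
    (hXcont : ∀ ω, ContinuousOn (fun t => X t ω) (Icc 0 T))
    (hb : ∀ᵐ ω ∂P, IntervalIntegrable (fun s => b s ω) volume 0 T)
    (hSDE : ∀ t ∈ Icc 0 T, ∀ᵐ ω ∂P, X t ω = X 0 ω + (∫ s in (0 : ℝ)..t, b s ω) + W t ω)
    {D : Set ℝ} (hXD : ∀ t ∈ Icc 0 T, ∀ ω, X t ω ∈ D) {f f' f'' : ℝ → ℝ}
    (hfm : Measurable f) (hfm' : Measurable f') (hf : ∀ x ∈ D, HasDerivAt f (f' x) x)
    (hf' : ∀ x ∈ D, HasDerivAt f' (f'' x) x) (hf'' : ContinuousOn f'' D) :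
    ∫⁻ ω, ENNReal.ofReal (Real.exp (f (X T ω) - ∫ s in (0 : ℝ)..T,
        (f' (X s ω) * b s ω + (f'' (X s ω) + f' (X s ω) ^ 2) / 2))) ∂P ≤
      ∫⁻ ω, ENNReal.ofReal (Real.exp (f (X 0 ω))) ∂P := by
  set M : ℕ → Ω → ℝ≥0∞ := fun n ω => ENNReal.ofReal (Real.exp (f (X 0 ω))) *
    ENNReal.ofReal (Real.exp (dyadicSum T n fun r s =>
      f' (X r ω) * (W s ω - W r ω) - f' (X r ω) ^ 2 / 2 * (s - r)))
  have hmean : ∀ n, ∫⁻ ω, M n ω ∂P = ∫⁻ ω, ENNReal.ofReal (Real.exp (f (X 0 ω))) ∂P := by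
    intro n
    refine hW.lintegral_mul_exp_sum (monotone_dyadicPoint hT n) (dyadicPoint_zero T n).ge
      (dyadicPoint_two_pow T n).le (H := fun k ω => f' (X (dyadicPoint T n k) ω)) ?_ fun k hk => ?_
    · rw [dyadicPoint_zero]
      exact (hfm.comp (hX 0 ⟨le_rfl, hT⟩)).exp.ennreal_ofReal
    · exact hfm'.comp (hX _ (dyadicPoints_subset_Icc hT ⟨n, k, hk.le, rfl⟩))
  have hM : ∀ n, Measurable (M n) := by
    have hXm := fun t ht => (hX t ht).mono (F.le t) le_rfl
    have hWm := fun t ht => (hW.measurable t ht).mono (F.le t) le_rfl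
    refine fun n => (hfm.comp (hXm 0 ⟨le_rfl, hT⟩)).exp.ennreal_ofReal.mul
      (measurable_dyadicSum fun r s hrs => ?_).exp.ennreal_ofReal
    have hr := dyadicPoints_subset_Icc hT hrs.left_mem
    have hf'X : Measurable fun ω => f' (X r ω) := hfm'.comp (hXm r hr)
    exact (hf'X.mul ((hWm s (dyadicPoints_subset_Icc hT hrs.right_mem)).sub (hWm r hr))).sub
      (((hf'X.pow_const 2).div_const 2).mul_const _)
  have hlim : ∀ᵐ ω ∂P, Tendsto (fun n => M n ω) atTop (nhds (ENNReal.ofReal (Real.exp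
      (f (X T ω) - ∫ s in (0 : ℝ)..T,
        (f' (X s ω) * b s ω + (f'' (X s ω) + f' (X s ω) ^ 2) / 2))))) := by
    filter_upwards [hW.ae_hasBrownianQuadraticVariation hT, hb,
      ae_forall_isDyadicStep_sub_eq hT hb hSDE] with ω hqv hbω hstep
    have hexponent := hqv.tendsto_dyadicSum_exponent hT (hXcont ω) hbω hstep
      (fun s hs => hf _ (hXD s hs ω)) (fun s hs => hf' _ (hXD s hs ω))
      (hf''.comp (hXcont ω) fun s hs => hXD s hs ω)
    simp only [M, ← ENNReal.ofReal_mul (Real.exp_pos _).le, ← Real.exp_add]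
    refine ENNReal.tendsto_ofReal (Tendsto.rexp ?_)
    convert hexponent.const_add (f (X 0 ω)) using 2
    ring
  calc _ = ∫⁻ ω, liminf (fun n => M n ω) atTop ∂P :=
        lintegral_congr_ae (hlim.mono fun ω hω => hω.liminf_eq.symm)
    _ ≤ liminf (fun n => ∫⁻ ω, M n ω ∂P) atTop := lintegral_liminf_le hM
    _ = ∫⁻ ω, ENNReal.ofReal (Real.exp (f (X 0 ω))) ∂P := by simp only [hmean, liminf_const]

end Lyapunov

lemma intervalIntegrable_comp_of_abs {a b : ℝ} {μ x : ℝ → ℝ} (hμ : Measurable μ)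
    (hx : ContinuousOn x (uIcc a b))
    (h : IntervalIntegrable (fun s => |μ (x s)|) volume a b) :
    IntervalIntegrable (fun s => μ (x s)) volume a b := by
  refine (IntervalIntegrable.intervalIntegrable_norm_iff ?_).1 h
  exact (hμ.comp_aemeasurable ((hx.mono uIoc_subset_uIcc).aemeasurable
    measurableSet_uIoc)).aestronglyMeasurable

theorem inverse_moments_with_exponential_weight_general
    {Ω : Type*} {mΩ : MeasurableSpace Ω} {P : Measure Ω} [IsProbabilityMeasure P] {T : ℝ}
    {F : Filtration ℝ mΩ} {W X b : ℝ → Ω → ℝ} (hW : HasBrownianIncrements W F P T)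
    (hX : ∀ t ∈ Icc 0 T, Measurable[F t] (X t))
    (hXcont : ∀ ω, ContinuousOn (fun t => X t ω) (Icc 0 T))
    (hb : ∀ᵐ ω ∂P, IntervalIntegrable (fun s => b s ω) volume 0 T)
    (hSDE : ∀ t ∈ Icc 0 T, ∀ᵐ ω ∂P, X t ω = X 0 ω + (∫ s in (0 : ℝ)..t, b s ω) + W t ω)
    (hXpos : ∀ t ∈ Icc 0 T, ∀ ω, 0 < X t ω) {t : ℝ} (ht : t ∈ Icc 0 T) (p : ℝ) :
    ∫⁻ ω, ENNReal.ofReal (X t ω ^ (-p) * Real.exp (p * ∫ s in (0 : ℝ)..t,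
        (b s ω / X s ω - (p + 1) / (2 * X s ω ^ 2)))) ∂P ≤
      ∫⁻ ω, ENNReal.ofReal (X 0 ω ^ (-p)) ∂P := by
  have hsub : Icc 0 t ⊆ Icc 0 T := Icc_subset_Icc_right ht.2
  have hbt : ∀ᵐ ω ∂P, IntervalIntegrable (fun s => b s ω) volume 0 t := hb.mono fun ω h =>
    h.mono_set (by rwa [uIcc_of_le ht.1, uIcc_of_le (ht.1.trans ht.2)])
  have hlyapunov := (hW.mono ht.2).lintegral_exp_sub_integral_le ht.1
    (fun s hs => hX s (hsub hs)) (fun ω => (hXcont ω).mono hsub) hbt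
    (fun s hs => hSDE s (hsub hs)) (D := Ioi 0) (fun s hs => hXpos s (hsub hs))
    (f := fun x => -p * Real.log x) (f' := fun x => -p * x⁻¹) (f'' := fun x => p * (x ^ 2)⁻¹)
    (by fun_prop) (by fun_prop)
    (fun x hx => (Real.hasDerivAt_log (ne_of_gt hx)).const_mul (-p))
    (fun x hx => ((hasDerivAt_inv (ne_of_gt hx)).const_mul (-p)).congr_deriv (by ring))
    (continuousOn_const.mul ((continuousOn_pow 2).inv₀ fun x hx => pow_ne_zero 2 (ne_of_gt hx)))
  have hrpow : ∀ s ∈ Icc 0 t, ∀ ω, X s ω ^ (-p) = Real.exp (-p * Real.log (X s ω)) :=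
    fun s hs ω => by rw [Real.rpow_def_of_pos (hXpos s (hsub hs) ω), mul_comm]
  simp only [hrpow 0 ⟨le_rfl, ht.1⟩, hrpow t ⟨ht.1, le_rfl⟩, ← Real.exp_add]
  convert hlyapunov using 6 with ω
  rw [sub_eq_add_neg, ← intervalIntegral.integral_neg, ← intervalIntegral.integral_const_mul]
  congr 2 with s
  rw [mul_comm (2 : ℝ), ← div_div]
  ring

theorem inverse_moments_with_exponential_weight
    {Ω : Type*} [MeasurableSpace Ω] (P : Measure Ω) [IsProbabilityMeasure P]
    (T : ℝ) (hT : 0 ≤ T)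
    (F : ℝ → MeasurableSpace Ω)
    (hF_mono : ∀ s t : ℝ, s ≤ t → F s ≤ F t)
    (hF_le : ∀ t : ℝ, F t ≤ (inferInstance : MeasurableSpace Ω))
    (μ : ℝ → ℝ) (hμmeas : Measurable μ)
    (W X : ℝ → Ω → ℝ)
    (hW0 : ∀ ω, W 0 ω = 0)
    (hWadapt : ∀ t ∈ Set.Icc (0:ℝ) T, @Measurable Ω ℝ (F t) _ (W t))
    (hWcont : ∀ ω, ContinuousOn (fun t => W t ω) (Set.Icc 0 T))
    (hWlaw : ∀ s t : ℝ, 0 ≤ s → s ≤ t → t ≤ T →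
      Measure.map (fun ω => W t ω - W s ω) P = gaussianReal 0 (Real.toNNReal (t - s)))
    (hWindep : ∀ s t : ℝ, 0 ≤ s → s ≤ t → t ≤ T →
      Indep (MeasurableSpace.comap (fun ω => W t ω - W s ω) inferInstance) (F s) P)
    (hXnonneg : ∀ t ω, 0 ≤ X t ω)
    (hXadapt : ∀ t ∈ Set.Icc (0:ℝ) T, @Measurable Ω ℝ (F t) _ (X t))
    (hXcont : ∀ ω, ContinuousOn (fun t => X t ω) (Set.Icc 0 T))
    (hXint : ∀ᵐ ω ∂P, IntervalIntegrable (fun s => |μ (X s ω)|) volume 0 T)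
    (hSDE : ∀ t ∈ Set.Icc (0:ℝ) T, ∀ᵐ ω ∂P,
      X t ω = X 0 ω + (∫ s in (0:ℝ)..t, μ (X s ω)) + W t ω)
    (hXpos : ∀ t ∈ Set.Icc (0:ℝ) T, ∀ ω, 0 < X t ω) :
    ∀ t ∈ Set.Icc (0:ℝ) T, ∀ p : ℝ,
      ∫⁻ ω, ENNReal.ofReal ((X t ω) ^ (-p) *
          Real.exp (p * ∫ s in (0:ℝ)..t,
            (μ (X s ω) / X s ω - (p + 1) / (2 * (X s ω) ^ 2)))) ∂P
        ≤ ∫⁻ ω, ENNReal.ofReal ((X 0 ω) ^ (-p)) ∂P := by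
  intro t ht p
  have hb : ∀ᵐ ω ∂P, IntervalIntegrable (fun s => μ (X s ω)) volume 0 T := hXint.mono fun ω =>
    intervalIntegrable_comp_of_abs hμmeas (uIcc_of_le hT ▸ hXcont ω)
  exact inverse_moments_with_exponential_weight_general (F := ⟨F, hF_mono, hF_le⟩)
    ⟨hWadapt, hWlaw, hWindep⟩ hXadapt hXcont hb hSDE hXpos ht p

end
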